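/- Let D be a digraph on a finite vertex set V in which every vertex has at least one in-neighbor, and suppose γ_t(D) = |V| − 1. If u and v are two distinct vertices each having out-degree 2, then |N⁺(u) ∪ N⁺(v)| ≤ 3; equivalently, u and v have at least one common out-neighbor. -/

import Mathlib

/-- A set `S` is a total dominating set of the digraph `D` (given as its arc
relation) if every vertex has an in-neighbor belonging to `S`. -/
def TotalDomSet {V : Type} (D : V → V → Prop) (S : Set V) : Prop :=
  ∀ v : V, ∃ u ∈ S, D u v

/-- The total domination number of a digraph: the least cardinality of a total
dominating set. -/
noncomputable def totalDomNum {V : Type} (D : V → V → Prop) : ℕ :=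
  sInf {n | ∃ S : Set V, TotalDomSet D S ∧ S.ncard = n}

/-- `D` is an orientation of the simple graph `G`: every arc of `D` lies on an
edge of `G`, and every edge of `G` carries exactly one of the two possible arcs. -/
def IsOrientation {V : Type} (G : SimpleGraph V) (D : V → V → Prop) : Prop :=
  (∀ u v : V, D u v → G.Adj u v) ∧ ∀ u v : V, G.Adj u v → (D u v ↔ ¬ D v u)

/-- An orientation (digraph) is valid if every vertex has at least one in-neighbor. -/
def IsValidOrientation {V : Type} (D : V → V → Prop) : Prop :=
  ∀ v : V, ∃ u : V, D u v

/-- The upper orientable total domination number of `G`. -/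
noncomputable def DOMt {V : Type} [Fintype V] (G : SimpleGraph V) : ℕ :=
  sSup {n | ∃ D : V → V → Prop, IsOrientation G D ∧ IsValidOrientation D ∧ totalDomNum D = n}

/-- The lower orientable total domination number of `G`. -/
noncomputable def domt {V : Type} [Fintype V] (G : SimpleGraph V) : ℕ :=
  sInf {n | ∃ D : V → V → Prop, IsOrientation G D ∧ IsValidOrientation D ∧ totalDomNum D = n}

/-!
A vertex set `S` dominates `N⁺(S)`, and each vertex outside `N⁺(S)` can be dominated by one further
vertex, so `γ_t(D) ≤ |S| + |V| - |N⁺(S)|`. For `S = {u, v}` and `γ_t(D) = |V| - 1` this gives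
`|N⁺(u) ∪ N⁺(v)| ≤ 3`, which two disjoint out-neighborhoods of size 2 would violate.
-/

/-- The out-neighborhood `N⁺(S)`: the vertices dominated by the vertex set `S`, possibly including
vertices of `S` itself. -/
def outNeighborhood {V : Type*} (D : V → V → Prop) (S : Set V) : Set V :=
  ⋃ u ∈ S, {w | D u w}

section TotalDomination

variable {V : Type} {D : V → V → Prop}

theorem totalDomNum_le_ncard {S : Set V} (hS : TotalDomSet D S) : totalDomNum D ≤ S.ncard :=
  Nat.sInf_le ⟨S, hS, rfl⟩

theorem totalDomSet_union_image_compl_outNeighborhood {S : Set V} {f : V → V}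
    (hf : ∀ w ∉ outNeighborhood D S, D (f w) w) :
    TotalDomSet D (S ∪ f '' (outNeighborhood D S)ᶜ) := by
  intro w
  by_cases hw : w ∈ outNeighborhood D S
  · obtain ⟨u, huS, huw⟩ := Set.mem_iUnion₂.mp hw
    exact ⟨u, Or.inl huS, huw⟩
  · exact ⟨f w, Or.inr (Set.mem_image_of_mem f hw), hf w hw⟩

theorem totalDomNum_add_ncard_outNeighborhood_le [Finite V] (hD : IsValidOrientation D)
    (S : Set V) : totalDomNum D + (outNeighborhood D S).ncard ≤ Nat.card V + S.ncard := by
  choose f hf using hD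
  have hdom : totalDomNum D ≤ S.ncard + (outNeighborhood D S)ᶜ.ncard :=
    calc totalDomNum D
      _ ≤ (S ∪ f '' (outNeighborhood D S)ᶜ).ncard :=
        totalDomNum_le_ncard (totalDomSet_union_image_compl_outNeighborhood fun w _ ↦ hf w)
      _ ≤ S.ncard + (f '' (outNeighborhood D S)ᶜ).ncard := Set.ncard_union_le _ _
      _ ≤ S.ncard + (outNeighborhood D S)ᶜ.ncard :=
        Nat.add_le_add_left Set.ncard_image_le _
  have hcompl := Set.ncard_add_ncard_compl (outNeighborhood D S)
  omega

end TotalDomination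

/-- In a digraph with all in-degrees positive whose total domination number is
`|V| - 1`, any two distinct vertices of out-degree 2 have out-neighborhoods
whose union has at most 3 elements; equivalently they share an out-neighbor. -/
theorem stmt_5 {V : Type} [Fintype V] (D : V → V → Prop)
    (hvalid : ∀ v : V, ∃ u : V, D u v)
    (hγ : totalDomNum D = Fintype.card V - 1)
    (u v : V) (huv : u ≠ v)
    (hu : {w : V | D u w}.ncard = 2) (hv : {w : V | D v w}.ncard = 2) :
    ({w : V | D u w} ∪ {w : V | D v w}).ncard ≤ 3 ∧ ∃ w : V, D u w ∧ D v w := by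
  have hbound : totalDomNum D + ({w : V | D u w} ∪ {w : V | D v w}).ncard ≤
      Fintype.card V + 2 := by
    simpa only [outNeighborhood, Set.biUnion_pair, Set.ncard_pair huv, Nat.card_eq_fintype_card]
      using totalDomNum_add_ncard_outNeighborhood_le hvalid {u, v}
  have hpos : 0 < Fintype.card V := Fintype.card_pos_iff.mpr ⟨u⟩
  have hunion : ({w : V | D u w} ∪ {w : V | D v w}).ncard ≤ 3 := by omega
  have hinter : ({w : V | D u w} ∩ {w : V | D v w}).ncard ≠ 0 := by
    have := Set.ncard_union_add_ncard_inter {w : V | D u w} {w : V | D v w}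
    omega
  exact ⟨hunion, Set.nonempty_of_ncard_ne_zero hinter⟩
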